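/- Let k₁, k₂, q₁, q₂ ∈ ℤ with k₁, k₂ ≥ 1, 3 ∤ q₁, 3 ∤ q₂, (k₁,q₁) ≠ (1,1), (k₂,q₂) ≠ (1,1) and (k₁,q₁) ≠ (k₂,q₂). Then the Lehmer pair associated with (3^{k₁}+q₁, 3^{k₁}−3q₁) and the Lehmer pair associated with (3^{k₂}+q₂, 3^{k₂}−3q₂) are not equivalent. -/

import Mathlib

open Complex

/-- A fixed choice of complex square root of an integer. -/
noncomputable def csqrt (a : ℤ) : ℂ := (a : ℂ) ^ ((1 : ℂ) / 2)

/-- First component of the Lehmer pair associated with `(a, b)`: `(√a - √b)/2`. -/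
noncomputable def assocFst (a b : ℤ) : ℂ := (csqrt a - csqrt b) / 2

/-- Second component of the Lehmer pair associated with `(a, b)`: `(√a + √b)/2`. -/
noncomputable def assocSnd (a b : ℤ) : ℂ := (csqrt a + csqrt b) / 2

/-- `(α, β)` is a Lehmer pair: `α`, `β` are algebraic integers, `(α+β)^2` and `αβ` are
nonzero coprime rational integers, and `α/β` is not a root of unity. -/
def IsLehmerPair (α β : ℂ) : Prop :=
  IsIntegral ℤ α ∧ IsIntegral ℤ β ∧
  (∃ p q : ℤ, ((α + β) ^ 2 = (p : ℂ)) ∧ (α * β = (q : ℂ)) ∧ p ≠ 0 ∧ q ≠ 0 ∧ IsCoprime p q) ∧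
  ¬ ∃ n : ℕ, 0 < n ∧ (α / β) ^ n = 1

/-- The Lehmer numbers `ũ_n(α, β)`. -/
noncomputable def lehmerU (α β : ℂ) (n : ℕ) : ℂ :=
  if Odd n then (α ^ n - β ^ n) / (α - β) else (α ^ n - β ^ n) / (α ^ 2 - β ^ 2)

/-- `z` is an integer divisible by `ℓ`. -/
def IntDvd (ℓ : ℕ) (z : ℂ) : Prop := ∃ m : ℤ, (m : ℂ) = z ∧ (ℓ : ℤ) ∣ m

/-- `ℓ` is a primitive divisor of `ũ_n(α, β)`: `ℓ` is a prime dividing `ũ_n(α, β)` but not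
dividing `(α^2 - β^2)^2 ũ_1(α,β) ⋯ ũ_{n-1}(α,β)`. -/
def IsPrimitiveDivisor (ℓ : ℕ) (n : ℕ) (α β : ℂ) : Prop :=
  ℓ.Prime ∧ IntDvd ℓ (lehmerU α β n) ∧
  ¬ IntDvd ℓ ((α ^ 2 - β ^ 2) ^ 2 * ∏ i ∈ Finset.Ico 1 n, lehmerU α β i)

/-- `(α, β)` is an `n`-defective Lehmer pair: a Lehmer pair such that `ũ_n(α, β)` has no
primitive divisor. -/
def IsDefective (n : ℕ) (α β : ℂ) : Prop :=
  IsLehmerPair α β ∧ ∀ ℓ : ℕ, ¬ IsPrimitiveDivisor ℓ n α β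

/-- Two Lehmer pairs `(α₁, β₁)` and `(α₂, β₂)` are equivalent if
`α₁/α₂ = β₁/β₂ ∈ {1, -1, i, -i}`. -/
def LehmerEquiv (α₁ β₁ α₂ β₂ : ℂ) : Prop :=
  ∃ c : ℂ, (c = 1 ∨ c = -1 ∨ c = Complex.I ∨ c = -Complex.I) ∧ α₁ = c * α₂ ∧ β₁ = c * β₂

/-- `phiAux n = φ_{n-2}`: the Fibonacci sequence shifted so as to start at index `-2`. -/
def phiAux : ℕ → ℤ
  | 0 => -1
  | 1 => 1
  | n + 2 => phiAux (n + 1) + phiAux n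

/-- `φ_k` for integer `k ≥ -2`: `φ_{-2} = -1`, `φ_{-1} = 1`, `φ_{k+1} = φ_k + φ_{k-1}`. -/
def phi (k : ℤ) : ℤ := phiAux (k + 2).toNat

/-- `psiAux n = ψ_{n-2}`: the Lucas sequence shifted so as to start at index `-2`. -/
def psiAux : ℕ → ℤ
  | 0 => 3
  | 1 => -1
  | n + 2 => psiAux (n + 1) + psiAux n

/-- `ψ_k` for integer `k ≥ -2`: `ψ_{-2} = 3`, `ψ_{-1} = -1`, `ψ_{k+1} = ψ_k + ψ_{k-1}`. -/
def psi (k : ℤ) : ℤ := psiAux (k + 2).toNat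

/-- `piAux n = π_{n-1}`. -/
def piAux : ℕ → ℤ
  | 0 => 1
  | 1 => 0
  | n + 2 => 2 * piAux (n + 1) + piAux n

/-- `π_k` for integer `k ≥ -1`: `π_{-1} = 1`, `π_0 = 0`, `π_{k+1} = 2π_k + π_{k-1}`. -/
def piSeq (k : ℤ) : ℤ := piAux (k + 1).toNat

/-- `rhoAux n = ρ_{n-1}`. -/
def rhoAux : ℕ → ℤ
  | 0 => -1
  | 1 => 1
  | n + 2 => 2 * rhoAux (n + 1) + rhoAux n

/-- `ρ_k` for integer `k ≥ -1`: `ρ_{-1} = -1`, `ρ_0 = 1`, `ρ_{k+1} = 2ρ_k + ρ_{k-1}`. -/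
def rhoSeq (k : ℤ) : ℤ := rhoAux (k + 1).toNat

/-- `zetaAux i n = ζ^{(i)}_{n-1}`. -/
def zetaAux (i : ℕ) : ℕ → ℤ
  | 0 => if i = 0 then -1 else if i = 1 then 2 else if i = 2 then 1 else -1
  | 1 => if i = 0 then 0 else 1
  | n + 2 => 4 * zetaAux i (n + 1) - zetaAux i n

/-- `ζ^{(i)}_k` for integer `k ≥ -1`, satisfying `ζ^{(i)}_{k+1} = 4ζ^{(i)}_k - ζ^{(i)}_{k-1}`
with initial values `(ζ^{(i)}_{-1}, ζ^{(i)}_0)` equal to `(-1, 0)`, `(2, 1)`, `(1, 1)`,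
`(-1, 1)` for `i = 0, 1, 2, 3` respectively. -/
def zeta (i : ℕ) (k : ℤ) : ℤ := zetaAux i (k + 1).toNat

theorem csqrt_sq_aux (a : ℤ) : csqrt a ^ 2 = (a : ℂ) := by
  unfold csqrt
  rw [one_div]
  exact_mod_cast Complex.cpow_nat_inv_pow (a : ℂ) (n := 2) (by norm_num)

theorem three_defective_second_family_inequiv (k₁ k₂ : ℕ) (q₁ q₂ : ℤ)
    (hk₁ : 1 ≤ k₁) (hk₂ : 1 ≤ k₂) (hq₁ : ¬ (3 ∣ q₁)) (hq₂ : ¬ (3 ∣ q₂))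
    (he₁ : ¬ (k₁ = 1 ∧ q₁ = 1)) (he₂ : ¬ (k₂ = 1 ∧ q₂ = 1))
    (hne : ¬ (k₁ = k₂ ∧ q₁ = q₂)) :
    ¬ LehmerEquiv (assocFst (3 ^ k₁ + q₁) (3 ^ k₁ - 3 * q₁))
      (assocSnd (3 ^ k₁ + q₁) (3 ^ k₁ - 3 * q₁))
      (assocFst (3 ^ k₂ + q₂) (3 ^ k₂ - 3 * q₂))
      (assocSnd (3 ^ k₂ + q₂) (3 ^ k₂ - 3 * q₂)) := by
  rintro ⟨c, hc, hα, hβ⟩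
  unfold assocFst at hα
  unfold assocSnd at hβ
  have ha := csqrt_sq_aux (3 ^ k₁ + q₁)
  have hb := csqrt_sq_aux (3 ^ k₁ - 3 * q₁)
  have ha' := csqrt_sq_aux (3 ^ k₂ + q₂)
  have hb' := csqrt_sq_aux (3 ^ k₂ - 3 * q₂)
  have h1 : csqrt (3 ^ k₁ + q₁) = c * csqrt (3 ^ k₂ + q₂) := by linear_combination hα + hβ
  have h2 : csqrt (3 ^ k₁ - 3 * q₁) = c * csqrt (3 ^ k₂ - 3 * q₂) := by
    linear_combination hβ - hα
  rw [h1, mul_pow, ha'] at ha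
  rw [h2, mul_pow, hb'] at hb
  have hp1 : (0 : ℤ) < 3 ^ k₁ := by positivity
  have hp2 : (0 : ℤ) < 3 ^ k₂ := by positivity
  have hc2 : c ^ 2 = 1 ∨ c ^ 2 = -1 := by
    rcases hc with rfl | rfl | rfl | rfl <;> simp
  rcases hc2 with h | h
  · rw [h, one_mul] at ha hb
    have ha2 : (3 ^ k₂ + q₂ : ℤ) = 3 ^ k₁ + q₁ := by exact_mod_cast ha
    have hb2 : (3 ^ k₂ - 3 * q₂ : ℤ) = 3 ^ k₁ - 3 * q₁ := by exact_mod_cast hb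
    have hk : (3 : ℤ) ^ k₁ = 3 ^ k₂ := by linarith
    refine hne ⟨?_, by linarith⟩
    have hk' : (3 : ℕ) ^ k₁ = 3 ^ k₂ := by exact_mod_cast hk
    exact Nat.pow_right_injective (le_refl 2 |>.trans (by norm_num)) hk'
  · rw [h, neg_one_mul] at ha hb
    have ha2 : -(3 ^ k₂ + q₂ : ℤ) = 3 ^ k₁ + q₁ := by exact_mod_cast ha
    have hb2 : -(3 ^ k₂ - 3 * q₂ : ℤ) = 3 ^ k₁ - 3 * q₁ := by exact_mod_cast hb
    linarith
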